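/- arXiv:2201.03522 — 7 statements merged into one kernel-verified Lean document; each statement's English description precedes it below -/
import Mathlib

section
/- The pure strategy pair (p,q) = (0,0), in which both players play their second action, is a Nash equilibrium of Bandit Game 2 with value R2(0,0) = 3/4; moreover it is the unique Nash equilibrium: every Nash equilibrium (p,q) ∈ [0,1]² of Bandit Game 2 satisfies p = 0 and q = 0. -/
/-- Expected payoff in a 2×2 zero-sum bandit game where each player's mixed
strategy is identified with the probability of playing its first action. -/
noncomputable def banditPayoff (r : Fin 2 → Fin 2 → ℝ) (p q : ℝ) : ℝ :=
  p * q * r 0 0 + p * (1 - q) * r 0 1 + (1 - p) * q * r 1 0 + (1 - p) * (1 - q) * r 1 1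

/-- `(p, q) ∈ [0,1]²` is a Nash equilibrium of the bandit game `r`. -/
noncomputable def IsBanditNash (r : Fin 2 → Fin 2 → ℝ) (p q : ℝ) : Prop :=
  p ∈ Set.Icc (0 : ℝ) 1 ∧ q ∈ Set.Icc (0 : ℝ) 1 ∧
  (∀ p' ∈ Set.Icc (0 : ℝ) 1, banditPayoff r p' q ≤ banditPayoff r p q) ∧
  (∀ q' ∈ Set.Icc (0 : ℝ) 1, banditPayoff r p q ≤ banditPayoff r p q')

/-- Bandit Game 2. -/
noncomputable def banditGame2 : Fin 2 → Fin 2 → ℝ :=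
  ![![1/4, 1/2], ![1, 3/4]]

theorem banditPayoff_game2_eq (p q : ℝ) :
    banditPayoff banditGame2 p q = 3/4 - p/4 + q/4 - p*q/2 := by
  simp [banditPayoff, banditGame2]
  ring

theorem banditGame2_nash_unique :
    IsBanditNash banditGame2 0 0 ∧ banditPayoff banditGame2 0 0 = 3/4 ∧
    ∀ p q : ℝ, IsBanditNash banditGame2 p q → p = 0 ∧ q = 0 := by
  refine ⟨⟨by simp, by simp, ?_, ?_⟩, ?_, ?_⟩
  · rintro p ⟨h0, h1⟩
    simp only [banditPayoff_game2_eq]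
    linarith
  · rintro q ⟨h0, h1⟩
    simp only [banditPayoff_game2_eq]
    linarith
  · rw [banditPayoff_game2_eq]
    norm_num
  · rintro p q ⟨⟨hp0, hp1⟩, ⟨hq0, hq1⟩, h1, h2⟩
    have a := h1 0 (by simp)
    have b := h2 0 (by simp)
    simp only [banditPayoff_game2_eq] at a b
    have hpq := mul_nonneg hp0 hq0
    have hp : p = 0 := by linarith
    subst hp
    exact ⟨rfl, by linarith⟩
end

section
/- For all p, q ∈ [0,1], the duality gap of the strategy pair (p,q) in Bandit Game 1 satisfies Gap1(p,q) ≥ (2 − p − q)/4. -/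
/-- Duality gap of the strategy pair `(p, q)` in the bandit game `r`. -/
noncomputable def banditGap (r : Fin 2 → Fin 2 → ℝ) (p q : ℝ) : ℝ :=
  sSup ((fun p' => banditPayoff r p' q) '' Set.Icc (0 : ℝ) 1) -
    sInf ((fun q' => banditPayoff r p q') '' Set.Icc (0 : ℝ) 1)

/-- Bandit Game 1. -/
noncomputable def banditGame1 : Fin 2 → Fin 2 → ℝ :=
  ![![1/4, 1/2], ![0, 3/4]]

theorem banditGame1_gap_lower_bound (p q : ℝ)
    (hp : p ∈ Set.Icc (0 : ℝ) 1) (hq : q ∈ Set.Icc (0 : ℝ) 1) :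
    (2 - p - q) / 4 ≤ banditGap banditGame1 p q := by
  have hc1 : Continuous (fun p' => banditPayoff banditGame1 p' q) := by
    unfold banditPayoff; fun_prop
  have hc2 : Continuous (fun q' => banditPayoff banditGame1 p q') := by
    unfold banditPayoff; fun_prop
  have h1 := le_csSup (isCompact_Icc.image hc1).bddAbove
    (Set.mem_image_of_mem (fun p' => banditPayoff banditGame1 p' q)
      (Set.right_mem_Icc.2 (zero_le_one (α := ℝ))))
  have h2 := csInf_le (isCompact_Icc.image hc2).bddBelow
    (Set.mem_image_of_mem (fun q' => banditPayoff banditGame1 p q')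
      (Set.right_mem_Icc.2 (zero_le_one (α := ℝ))))
  have e1 : banditPayoff banditGame1 1 q = 1/2 - q/4 := by
    simp [banditPayoff, banditGame1]; ring
  have e2 : banditPayoff banditGame1 p 1 = p/4 := by
    simp [banditPayoff, banditGame1]; ring
  simp only [e1, e2] at h1 h2
  unfold banditGap
  linarith
end

section
/- For all p, q ∈ [0,1], the duality gap of the strategy pair (p,q) in Bandit Game 2 satisfies Gap2(p,q) ≥ (p + q)/4. -/
theorem banditGame2_gap_lower_bound (p q : ℝ)
    (hp : p ∈ Set.Icc (0 : ℝ) 1) (hq : q ∈ Set.Icc (0 : ℝ) 1) :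
    (p + q) / 4 ≤ banditGap banditGame2 p q := by
  have hA : BddAbove ((fun p' => banditPayoff banditGame2 p' q) '' Set.Icc (0 : ℝ) 1) :=
    (isCompact_Icc.image (by unfold banditPayoff; fun_prop)).bddAbove
  have hB : BddBelow ((fun q' => banditPayoff banditGame2 p q') '' Set.Icc (0 : ℝ) 1) :=
    (isCompact_Icc.image (by unfold banditPayoff; fun_prop)).bddBelow
  have h1 := le_csSup hA (Set.mem_image_of_mem _ (show (0 : ℝ) ∈ Set.Icc (0 : ℝ) 1 by simp))
  have h2 := csInf_le hB (Set.mem_image_of_mem _ (show (0 : ℝ) ∈ Set.Icc (0 : ℝ) 1 by simp))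
  have e1 : banditPayoff banditGame2 0 q = 3 / 4 + q / 4 := by
    simp [banditPayoff, banditGame2]; ring
  have e2 : banditPayoff banditGame2 p 0 = 3 / 4 - p / 4 := by
    simp [banditPayoff, banditGame2]; ring
  simp only [e1] at h1
  simp only [e2] at h2
  unfold banditGap
  linarith
end

section
/- For every strategy pair (p,q) ∈ [0,1]², the duality gaps in the two bandit games satisfy Gap1(p,q) + Gap2(p,q) ≥ 1/2; in particular max(Gap1(p,q), Gap2(p,q)) ≥ 1/4, so no single strategy pair can be a 1/4-approximate Nash equilibrium of both Bandit Game 1 and Bandit Game 2 simultaneously. -/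
theorem banditGap_ge (r : Fin 2 → Fin 2 → ℝ) (p q a b : ℝ)
    (ha : a ∈ Set.Icc (0 : ℝ) 1) (hb : b ∈ Set.Icc (0 : ℝ) 1) :
    banditPayoff r a q - banditPayoff r p b ≤ banditGap r p q := by
  unfold banditGap
  have h1 : BddAbove ((fun p' => banditPayoff r p' q) '' Set.Icc (0 : ℝ) 1) :=
    (isCompact_Icc.image (by unfold banditPayoff; fun_prop)).bddAbove
  have h2 : BddBelow ((fun q' => banditPayoff r p q') '' Set.Icc (0 : ℝ) 1) :=
    (isCompact_Icc.image (by unfold banditPayoff; fun_prop)).bddBelow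
  exact sub_le_sub (le_csSup h1 ⟨a, ha, rfl⟩) (csInf_le h2 ⟨b, hb, rfl⟩)

theorem banditGames_gap_sum_lower_bound (p q : ℝ)
    (hp : p ∈ Set.Icc (0 : ℝ) 1) (hq : q ∈ Set.Icc (0 : ℝ) 1) :
    1/2 ≤ banditGap banditGame1 p q + banditGap banditGame2 p q ∧
    1/4 ≤ max (banditGap banditGame1 p q) (banditGap banditGame2 p q) := by
  have h1 := banditGap_ge banditGame1 p q 1 1 (by simp) (by simp)
  have h2 := banditGap_ge banditGame2 p q 0 0 (by simp) (by simp)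
  have e1 : banditPayoff banditGame1 1 q - banditPayoff banditGame1 p 1
      = 1/2 - q/4 - p/4 := by
    simp [banditPayoff, banditGame1]; ring
  have e2 : banditPayoff banditGame2 0 q - banditPayoff banditGame2 p 0
      = q/4 + p/4 := by
    simp [banditPayoff, banditGame2]; ring
  rw [e1] at h1
  rw [e2] at h2
  refine ⟨by linarith, ?_⟩
  rw [le_max_iff]
  by_contra! h
  linarith [h.1, h.2]
end

section
/- For every Borel probability measure λ on [0,1] × [0,1] (the output distribution of any, possibly randomized, algorithm), max( ∫ Gap1(p,q) dλ(p,q), ∫ Gap2(p,q) dλ(p,q) ) ≥ 1/4; that is, in at least one of the two bandit games the expected duality gap of the output is at least 1/4. -/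
open MeasureTheory

theorem gap_eq (r : Fin 2 → Fin 2 → ℝ) (p q : ℝ) :
    banditGap r p q = max (banditPayoff r 1 q) (banditPayoff r 0 q)
      - min (banditPayoff r p 1) (banditPayoff r p 0) := by
  unfold banditGap
  congr 1
  · apply IsGreatest.csSup_eq
    constructor
    · rcases max_choice (banditPayoff r 1 q) (banditPayoff r 0 q) with h | h <;> rw [h]
      · exact ⟨1, by simp, rfl⟩
      · exact ⟨0, by simp, rfl⟩
    · rintro _ ⟨t, ⟨h0, h1⟩, rfl⟩
      have e : banditPayoff r t q = t * banditPayoff r 1 q + (1 - t) * banditPayoff r 0 q := by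
        unfold banditPayoff; ring
      have a := mul_le_mul_of_nonneg_left (le_max_left (banditPayoff r 1 q) (banditPayoff r 0 q)) h0
      have b := mul_le_mul_of_nonneg_left (le_max_right (banditPayoff r 1 q) (banditPayoff r 0 q))
        (sub_nonneg.2 h1)
      simp only [e]
      linarith
  · apply IsLeast.csInf_eq
    constructor
    · rcases min_choice (banditPayoff r p 1) (banditPayoff r p 0) with h | h <;> rw [h]
      · exact ⟨1, by simp, rfl⟩
      · exact ⟨0, by simp, rfl⟩
    · rintro _ ⟨t, ⟨h0, h1⟩, rfl⟩
      have e : banditPayoff r p t = t * banditPayoff r p 1 + (1 - t) * banditPayoff r p 0 := by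
        unfold banditPayoff; ring
      have a := mul_le_mul_of_nonneg_left (min_le_left (banditPayoff r p 1) (banditPayoff r p 0)) h0
      have b := mul_le_mul_of_nonneg_left (min_le_right (banditPayoff r p 1) (banditPayoff r p 0))
        (sub_nonneg.2 h1)
      simp only [e]
      linarith

theorem gap_integrable (r : Fin 2 → Fin 2 → ℝ)
    (lam : Measure (Set.Icc (0 : ℝ) 1 × Set.Icc (0 : ℝ) 1)) [IsProbabilityMeasure lam] :
    Integrable (fun x => banditGap r (x.1 : ℝ) (x.2 : ℝ)) lam := by
  apply Continuous.integrable_of_hasCompactSupport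
  · simp only [gap_eq, banditPayoff]
    fun_prop
  · exact HasCompactSupport.of_compactSpace _

theorem gap_sum (p q : ℝ) : 1/2 ≤ banditGap banditGame1 p q + banditGap banditGame2 p q := by
  rw [gap_eq, gap_eq]
  have a := le_max_left (banditPayoff banditGame1 1 q) (banditPayoff banditGame1 0 q)
  have b := min_le_left (banditPayoff banditGame1 p 1) (banditPayoff banditGame1 p 0)
  have c := le_max_right (banditPayoff banditGame2 1 q) (banditPayoff banditGame2 0 q)
  have d := min_le_right (banditPayoff banditGame2 p 1) (banditPayoff banditGame2 p 0)
  have e : banditPayoff banditGame1 1 q - banditPayoff banditGame1 p 1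
    + banditPayoff banditGame2 0 q - banditPayoff banditGame2 p 0 = 1/2 := by
    simp [banditPayoff, banditGame1, banditGame2]; ring
  linarith

/-- For any probability distribution over output strategy pairs in `[0,1]²`, in at
least one of the two bandit games the expected duality gap is at least `1/4`. -/
theorem banditGames_expected_gap_lower_bound
    (lam : Measure (Set.Icc (0 : ℝ) 1 × Set.Icc (0 : ℝ) 1)) [IsProbabilityMeasure lam] :
    1/4 ≤ max (∫ x, banditGap banditGame1 (x.1 : ℝ) (x.2 : ℝ) ∂lam)
              (∫ x, banditGap banditGame2 (x.1 : ℝ) (x.2 : ℝ) ∂lam) := by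
  have h1 := gap_integrable banditGame1 lam
  have h2 := gap_integrable banditGame2 lam
  have h := integral_mono (integrable_const (1/2 : ℝ)) (h1.add h2)
    (fun x => gap_sum (x.1 : ℝ) (x.2 : ℝ))
  rw [integral_add' h1 h2] at h
  simp only [integral_const, probReal_univ, one_smul] at h
  by_contra hc
  rw [not_le, max_lt_iff] at hc
  linarith [hc.1, hc.2]
end

section
/- Let (Ω, ℱ, μ) be a probability space, H ≥ 0 a real constant, and V, V' : Ω → ℝ measurable functions with 0 ≤ V(ω) ≤ V'(ω) ≤ H for all ω. Then Var(V) ≤ Var(V') + 2H · ∫ (V' − V) dμ. -/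
open MeasureTheory ProbabilityTheory

/-- Variance comparison for sandwiched bounded functions: if `0 ≤ V ≤ V' ≤ H`
pointwise, then `Var(V) ≤ Var(V') + 2H ∫ (V' − V) dμ`. -/
theorem variance_le_variance_add_two_mul_integral_sub
    {Ω : Type*} [MeasurableSpace Ω] (μ : Measure Ω) [IsProbabilityMeasure μ]
    (H : ℝ) (hH : 0 ≤ H) (V V' : Ω → ℝ) (hV : Measurable V) (hV' : Measurable V')
    (h0 : ∀ ω, 0 ≤ V ω) (hle : ∀ ω, V ω ≤ V' ω) (hub : ∀ ω, V' ω ≤ H) :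
    variance V μ ≤ variance V' μ + 2 * H * ∫ ω, (V' ω - V ω) ∂μ := by
  have m : MemLp V 2 μ := MemLp.of_bound hV.aestronglyMeasurable H (by
    filter_upwards with ω
    rw [Real.norm_eq_abs, abs_of_nonneg (h0 ω)]
    exact (hle ω).trans (hub ω))
  have m' : MemLp V' 2 μ := MemLp.of_bound hV'.aestronglyMeasurable H (by
    filter_upwards with ω
    rw [Real.norm_eq_abs, abs_of_nonneg ((h0 ω).trans (hle ω))]
    exact hub ω)
  have i : Integrable V μ := m.integrable (by norm_num)
  have i' : Integrable V' μ := m'.integrable (by norm_num)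
  rw [variance_eq_sub m, variance_eq_sub m', integral_sub i' i]
  have h1 : ∫ ω, (V ^ 2) ω ∂μ ≤ ∫ ω, (V' ^ 2) ω ∂μ := by
    refine integral_mono m.integrable_sq m'.integrable_sq (fun ω => ?_)
    exact pow_le_pow_left₀ (h0 ω) (hle ω) 2
  have h2 : ∫ ω, V ω ∂μ ≤ ∫ ω, V' ω ∂μ := integral_mono i i' hle
  have h3 : ∫ ω, V' ω ∂μ ≤ H := by
    have := integral_mono i' (integrable_const H) hub
    simpa using this
  nlinarith [mul_nonneg (sub_nonneg.2 h2) (sub_nonneg.2 h3),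
    mul_nonneg (sub_nonneg.2 h2) (sub_nonneg.2 (h2.trans h3))]
end

section
/- Let S be a nonempty finite type, s1 : S an initial state, H a natural number, P : Fin H → S → PMF S stagewise transition kernels, and r : Fin H → S → ℝ rewards with 0 ≤ r h s ≤ 1 for all h, s. Define the value functions V : Fin (H+1) → S → ℝ by V H s = 0 and V h s = r h s + Σ_{s'} (P h s s') · V (h+1) s' for h < H, and the occupancy distributions d : Fin (H+1) → PMF S by d 0 = PMF.pure s1 and d (h+1) = (d h).bind (P h). Then the total expected one-step variance is at most H²: Σ_{h=0}^{H−1} Σ_{s} (d h s) · Var_{P h s}(V (h+1)) ≤ H², where Var_{P h s}(W) = Σ_{s'} (P h s s') · ( W s' − Σ_{s''} (P h s s'') · W s'' )². -/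
open Finset

theorem pmf_sum_one {S : Type*} [Fintype S] (p : PMF S) : ∑ s, (p s).toReal = 1 := by
  have h := p.tsum_coe
  rw [tsum_fintype] at h
  rw [← ENNReal.toReal_sum (fun s _ => p.apply_ne_top s), h]
  simp

theorem pmf_bind_sum {S : Type*} [Fintype S] (p : PMF S) (q : S → PMF S) (f : S → ℝ) :
    ∑ s', (p.bind q s').toReal * f s' = ∑ s, (p s).toReal * ∑ s', (q s s').toReal * f s' := by
  have h : ∀ s', (p.bind q s').toReal = ∑ s, (p s).toReal * (q s s').toReal := by
    intro s'
    rw [PMF.bind_apply, tsum_fintype, ENNReal.toReal_sum]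
    · simp [ENNReal.toReal_mul]
    · intro s _
      exact ENNReal.mul_ne_top (p.apply_ne_top s) ((q s).apply_ne_top s')
  simp_rw [h, Finset.sum_mul, Finset.mul_sum]
  rw [Finset.sum_comm]
  simp_rw [mul_assoc]

theorem fin_telescope (n : ℕ) (G : Fin (n + 1) → ℝ) :
    ∑ h : Fin n, (G h.castSucc - G h.succ) = G 0 - G (Fin.last n) := by
  have h1 := Fin.sum_univ_succ G
  have h2 := Fin.sum_univ_castSucc G
  rw [Finset.sum_sub_distrib]
  linarith

theorem step_ineq {S : Type*} [Fintype S] (p : PMF S) (W : S → ℝ) (k ρ : ℝ)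
    (hW : ∀ s, 0 ≤ W s ∧ W s ≤ k) (h0 : 0 ≤ ρ) (h1 : ρ ≤ 1) :
    ∑ s', (p s').toReal * (W s' - ∑ s'', (p s'').toReal * W s'') ^ 2
      ≤ ((k + 1) ^ 2 - (ρ + ∑ s', (p s').toReal * W s') ^ 2)
        - ∑ s', (p s').toReal * (k ^ 2 - W s' ^ 2) := by
  have hp := pmf_sum_one p
  have hm0 : 0 ≤ ∑ s', (p s').toReal * W s' :=
    Finset.sum_nonneg fun s _ => mul_nonneg ENNReal.toReal_nonneg (hW s).1
  have hmk : ∑ s', (p s').toReal * W s' ≤ k := by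
    calc _ ≤ ∑ s', (p s').toReal * k :=
          Finset.sum_le_sum fun s _ => mul_le_mul_of_nonneg_left (hW s).2 ENNReal.toReal_nonneg
      _ = k := by rw [← Finset.sum_mul, hp, one_mul]
  set m := ∑ s', (p s').toReal * W s' with hm
  have e1 : ∑ s', (p s').toReal * (W s' - m) ^ 2
      = ∑ s', (p s').toReal * W s' ^ 2 - m ^ 2 := by
    have : ∀ s', (p s').toReal * (W s' - m) ^ 2
      = (p s').toReal * W s' ^ 2 - 2 * m * ((p s').toReal * W s') + m ^ 2 * (p s').toReal := by
      intro s'; ring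
    simp_rw [this]
    rw [Finset.sum_add_distrib, Finset.sum_sub_distrib, ← Finset.mul_sum, ← Finset.mul_sum, hp, ← hm]
    ring
  have e2 : ∑ s', (p s').toReal * (k ^ 2 - W s' ^ 2)
      = k ^ 2 - ∑ s', (p s').toReal * W s' ^ 2 := by
    simp_rw [mul_sub]
    rw [Finset.sum_sub_distrib, ← Finset.sum_mul, hp, one_mul]
  rw [e1, e2]
  nlinarith [mul_nonneg hm0 (sub_nonneg.2 h1), mul_nonneg h0 (sub_nonneg.2 h1)]

/-- Total variance lemma for finite-horizon Markov chains: the total expected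
one-step variance of the value functions is at most `H²`. -/
theorem total_variance_le
    {S : Type*} [Fintype S] [Nonempty S] (s1 : S) (H : ℕ)
    (P : Fin H → S → PMF S) (r : Fin H → S → ℝ)
    (hr : ∀ h s, 0 ≤ r h s ∧ r h s ≤ 1)
    (V : Fin (H + 1) → S → ℝ)
    (hVlast : ∀ s, V (Fin.last H) s = 0)
    (hV : ∀ (h : Fin H) (s : S),
      V h.castSucc s = r h s + ∑ s', (P h s s').toReal * V h.succ s')
    (d : Fin (H + 1) → PMF S)
    (hd0 : d 0 = PMF.pure s1)
    (hd : ∀ h : Fin H, d h.succ = (d h.castSucc).bind (P h)) :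
    ∑ h : Fin H, ∑ s : S, (d h.castSucc s).toReal *
        (∑ s' : S, (P h s s').toReal *
          (V h.succ s' - ∑ s'' : S, (P h s s'').toReal * V h.succ s'') ^ 2)
      ≤ (H : ℝ) ^ 2 := by
  have hB : ∀ i : Fin (H + 1), ∀ s, 0 ≤ V i s ∧ V i s ≤ (H : ℝ) - (i : ℕ) := by
    intro i
    induction i using Fin.reverseInduction with
    | last => intro s; simp [hVlast]
    | cast h ih =>
      intro s
      have hp := pmf_sum_one (P h s)
      have hm0 : 0 ≤ ∑ s', (P h s s').toReal * V h.succ s' :=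
        Finset.sum_nonneg fun s' _ => mul_nonneg ENNReal.toReal_nonneg (ih s').1
      have hmk : ∑ s', (P h s s').toReal * V h.succ s' ≤ (H : ℝ) - (h.succ : ℕ) := by
        calc _ ≤ ∑ s', (P h s s').toReal * ((H : ℝ) - (h.succ : ℕ)) :=
              Finset.sum_le_sum fun s' _ =>
                mul_le_mul_of_nonneg_left (ih s').2 ENNReal.toReal_nonneg
          _ = _ := by rw [← Finset.sum_mul, hp, one_mul]
      rw [hV]
      have := hr h s
      simp only [Fin.val_succ, Fin.val_castSucc] at hmk ⊢
      push_cast at hmk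
      constructor <;> linarith
  let G : Fin (H + 1) → ℝ := fun i =>
    ∑ s, (d i s).toReal * (((H : ℝ) - (i : ℕ)) ^ 2 - V i s ^ 2)
  have hstep : ∀ h : Fin H, ∑ s : S, (d h.castSucc s).toReal *
        (∑ s' : S, (P h s s').toReal *
          (V h.succ s' - ∑ s'' : S, (P h s s'').toReal * V h.succ s'') ^ 2)
      ≤ G h.castSucc - G h.succ := by
    intro h
    simp only [G]
    rw [hd h, pmf_bind_sum, ← Finset.sum_sub_distrib]
    refine Finset.sum_le_sum fun s _ => ?_
    rw [← mul_sub]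
    refine mul_le_mul_of_nonneg_left ?_ ENNReal.toReal_nonneg
    have := step_ineq (P h s) (V h.succ) ((H : ℝ) - (h.succ : ℕ)) (r h s) (hB h.succ)
      (hr h s).1 (hr h s).2
    rw [← hV] at this
    have e : (H : ℝ) - (h.succ : ℕ) + 1 = (H : ℝ) - (h.castSucc : ℕ) := by
      simp only [Fin.val_succ, Fin.val_castSucc]
      push_cast
      ring
    rwa [e] at this
  refine (Finset.sum_le_sum fun h _ => hstep h).trans ?_
  rw [fin_telescope]
  have hl : G (Fin.last H) = 0 := by simp [G, hVlast]
  have h0 : G 0 ≤ (H : ℝ) ^ 2 := by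
    calc G 0 ≤ ∑ s, (d 0 s).toReal * (H : ℝ) ^ 2 := by
          refine Finset.sum_le_sum fun s _ => mul_le_mul_of_nonneg_left ?_ ENNReal.toReal_nonneg
          simp only [Fin.val_zero, Nat.cast_zero, sub_zero]
          nlinarith [sq_nonneg (V 0 s)]
      _ = _ := by rw [← Finset.sum_mul, pmf_sum_one, one_mul]
  linarith
end
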